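/- arXiv:2212.10118 — 3 statements merged into one kernel-verified Lean document; each statement's English description precedes it below -/
import Mathlib

section
/- Let s > 0, let R, C : ℕ → ℝ with R(k) > 0 and C(k) > 0 for all k ≥ 1, and let H : ℕ → ℝ with H(k) > 0 for all k satisfy, for all k ≥ 0, H(k) = (1/R(k+1)) / ( 1 + (1/(s·R(k+1)·C(k+1))) / ( 1 + (1/(s·C(k+1)))·H(k+1) ) ). Then for every n ≥ 1, H(0) = cf(L_n), where L_n is the list [1/R(1)] followed, for k = 1, …, n−1, by the pairs [1/(s·R(k)·C(k)), 1/(s·R(k+1)·C(k))], and ending with the two entries 1/(s·R(n)·C(n)) and H(n)/(s·C(n)). -/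
/-- Continued fraction of a finite list: cf [a₁,…,a_k] = a₁/(1 + a₂/(1 + ⋯/(1 + a_k))). -/
noncomputable def cf : List ℝ → ℝ
  | [] => 0
  | a :: l => a / (1 + cf l)

/-! The value of a continued fraction depends on a tail only through the value of that tail, and
dividing a continued fraction by a constant only rescales its first entry. Hence, in the last entry
`H n / (s C n)`, the next stage of the recursion can be expanded in place: `H n` is the continued
fraction starting with `1 / R (n + 1)`, and division by `s C n` turns that first entry into
`1 / (s R (n + 1) C n)`. Repeating the expansion telescopes from the first stage to the `n`-th. -/

theorem cf_append_congr (l : List ℝ) {t u : List ℝ} (h : cf t = cf u) :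
    cf (l ++ t) = cf (l ++ u) := by
  induction l with
  | nil => exact h
  | cons a l ih => simp only [List.cons_append, cf, ih]

theorem cf_cons_div (a c : ℝ) (l : List ℝ) : cf (a :: l) / c = cf (a / c :: l) :=
  div_right_comm a (1 + cf l) c

theorem cf_singleton (a : ℝ) : cf [a] = a := by
  simp only [cf, add_zero, div_one]

theorem cf_eq_cf_flatMap_range_append {b t : ℕ → List ℝ}
    (h : ∀ k, cf (t k) = cf (b k ++ t (k + 1))) (n : ℕ) :
    cf (t 0) = cf ((List.range n).flatMap b ++ t n) := by
  induction n with
  | zero => rfl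
  | succ n ih =>
    calc cf (t 0) = cf ((List.range n).flatMap b ++ t n) := ih
      _ = cf ((List.range n).flatMap b ++ (b n ++ t (n + 1))) := cf_append_congr _ (h n)
      _ = cf ((List.range (n + 1)).flatMap b ++ t (n + 1)) := by
        rw [List.range_succ, List.flatMap_append, List.flatMap_singleton, List.append_assoc]

section Ladder

variable (s : ℝ) (R C H : ℕ → ℝ)

/-- The two partial numerators that stage `k` of the ladder contributes once stage `k + 1` has been
expanded. Stages are numbered from `1`. -/
noncomputable def ladderBlock (k : ℕ) : List ℝ :=
  [1 / (s * R k * C k), 1 / (s * R (k + 1) * C k)]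

/-- The partial numerators ending a ladder expanded up to stage `k`; the rest of the ladder enters
through its transfer function `H k`. -/
noncomputable def ladderTail (k : ℕ) : List ℝ :=
  [1 / (s * R k * C k), H k / (s * C k)]

variable {s R C H}

theorem ladder_stage_eq_cf (k : ℕ) :
    (1 / R k) / (1 + (1 / (s * R k * C k)) / (1 + (1 / (s * C k)) * H k)) =
      cf (1 / R k :: ladderTail s R C H k) := by
  simp only [ladderTail, cf, add_zero, div_one, one_div_mul_eq_div]

theorem cf_ladderTail_eq_cf_ladderBlock_append {k : ℕ}
    (h : H k = cf (1 / R (k + 1) :: ladderTail s R C H (k + 1))) :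
    cf (ladderTail s R C H k) = cf (ladderBlock s R C k ++ ladderTail s R C H (k + 1)) := by
  have first_entry : 1 / R (k + 1) / (s * C k) = 1 / (s * R (k + 1) * C k) := by
    rw [div_div, mul_left_comm, mul_assoc]
  have last_entry : cf [H k / (s * C k)] =
      cf (1 / (s * R (k + 1) * C k) :: ladderTail s R C H (k + 1)) := by
    rw [cf_singleton, h, cf_cons_div, first_entry]
  exact cf_append_congr [1 / (s * R k * C k)] last_entry

end Ladder

theorem transfer_function_continued_fraction
    (s : ℝ) (hs : 0 < s)
    (R C : ℕ → ℝ)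
    (hR : ∀ k : ℕ, 0 < R k) (hC : ∀ k : ℕ, 0 < C k)
    (H : ℕ → ℝ) (hH : ∀ k : ℕ, 0 < H k)
    (hrec : ∀ k : ℕ,
      H k =
        (1 / R (k + 1)) /
          (1 + (1 / (s * R (k + 1) * C (k + 1))) /
            (1 + (1 / (s * C (k + 1))) * H (k + 1)))) :
    ∀ n : ℕ, 1 ≤ n →
      H 0 =
        cf ((1 / R 1) ::
          ((List.range (n - 1)).flatMap fun j =>
            [1 / (s * R (j + 1) * C (j + 1)), 1 / (s * R (j + 2) * C (j + 1))]) ++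
          [1 / (s * R n * C n), H n / (s * C n)]) := by
  intro n hn
  obtain ⟨m, rfl⟩ := Nat.exists_eq_add_of_le' hn
  have stage_eq (k : ℕ) : H k = cf (1 / R (k + 1) :: ladderTail s R C H (k + 1)) :=
    (hrec k).trans (ladder_stage_eq_cf (k + 1))
  have tail_eq : cf (ladderTail s R C H 1) =
      cf ((List.range m).flatMap (fun j => ladderBlock s R C (j + 1)) ++
        ladderTail s R C H (m + 1)) :=
    cf_eq_cf_flatMap_range_append (t := fun j => ladderTail s R C H (j + 1))
      (fun j => cf_ladderTail_eq_cf_ladderBlock_append (stage_eq (j + 1))) m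
  exact (stage_eq 0).trans (cf_append_congr [1 / R 1] tail_eq)
end

section
/- For real numbers z > 0, σ > 0, ρ > 0 and every integer n ≥ 1, cf([a_1(z,σ,ρ), …, a_{n+1}(z,σ,ρ)]) = z / ( 1 + cf([a_1(z/σ,ρ,σ), …, a_n(z/σ,ρ,σ)]) ), where a_k is the fractal Cauer continued-fraction entry sequence. (This is the truncated form of the functional relation g(Z(s),σ,ρ) = Z(s)/(1 + g(Z(σs),ρ,σ)), in which the roles of σ and ρ are permuted.) -/
/-- The entries of the continued-fraction expansion of the transfer function of a
fractal Cauer ladder network: a₁ = z, a_{2m} = z·σ^{-m}·ρ^{-(m-1)},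
a_{2m+1} = z·σ^{-m}·ρ^{-m} (m ≥ 1). -/
noncomputable def fractalEntry (z σ ρ : ℝ) (k : ℕ) : ℝ :=
  if k = 1 then z
  else if k % 2 = 0 then z * σ ^ (-(k / 2 : ℤ)) * ρ ^ (-((k / 2 : ℤ) - 1))
  else z * σ ^ (-(k / 2 : ℤ)) * ρ ^ (-(k / 2 : ℤ))

lemma cf_map_range_succ (a : ℕ → ℝ) (n : ℕ) :
    cf ((List.range (n + 1)).map a) = a 0 / (1 + cf ((List.range n).map fun i => a (i + 1))) := by
  rw [List.range_succ_eq_map, List.map_cons, List.map_map, cf]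
  rfl

lemma fractalEntry_succ (z σ ρ : ℝ) (k : ℕ) :
    fractalEntry z σ ρ (k + 1) = z * σ⁻¹ ^ ((k + 1) / 2) * ρ⁻¹ ^ (k / 2) := by
  have cast_half : ((k + 1 : ℕ) : ℤ) / 2 = ((k + 1) / 2 : ℕ) := (Int.natCast_ediv _ 2).symm
  rw [fractalEntry, cast_half]
  split_ifs with first even
  · obtain rfl : k = 0 := by lia
    simp
  · have half_succ : (k + 1) / 2 = k / 2 + 1 := by lia
    have rho_exponent : -(((k / 2 + 1 : ℕ) : ℤ) - 1) = -(k / 2 : ℕ) := by lia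
    rw [half_succ, rho_exponent, zpow_neg, zpow_neg, zpow_natCast, zpow_natCast, inv_pow, inv_pow]
  · have half_eq : (k + 1) / 2 = k / 2 := by lia
    rw [half_eq, zpow_neg, zpow_neg, zpow_natCast, zpow_natCast, inv_pow, inv_pow]

lemma fractalEntry_add_two (z σ ρ : ℝ) (k : ℕ) :
    fractalEntry z σ ρ (k + 2) = fractalEntry (z / σ) ρ σ (k + 1) := by
  have half_add_two : (k + 1 + 1) / 2 = k / 2 + 1 := Nat.add_div_right k two_pos
  rw [fractalEntry_succ, fractalEntry_succ, half_add_two, pow_succ]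
  ring

theorem fractal_cf_functional_relation_truncated_general
    (z σ ρ : ℝ) (_hσ : σ ≠ 0) (_hρ : ρ ≠ 0) (n : ℕ) :
    cf ((List.range (n + 1)).map fun i => fractalEntry z σ ρ (i + 1)) =
      z / (1 + cf ((List.range n).map fun i => fractalEntry (z / σ) ρ σ (i + 1))) := by
  have first_entry : fractalEntry z σ ρ (0 + 1) = z := if_pos rfl
  simp only [cf_map_range_succ, first_entry, fractalEntry_add_two]

theorem fractal_cf_functional_relation_truncated
    (z σ ρ : ℝ) (hz : 0 < z) (hσ : 0 < σ) (hρ : 0 < ρ) :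
    ∀ n : ℕ, 1 ≤ n →
      cf ((List.range (n + 1)).map fun i => fractalEntry z σ ρ (i + 1)) =
        z / (1 + cf ((List.range n).map fun i => fractalEntry (z / σ) ρ σ (i + 1))) := by
  intro n _
  exact fractal_cf_functional_relation_truncated_general z σ ρ hσ.ne' hρ.ne' n
end

section
/- Let σ > 0, ρ > 0 with σ·ρ ≠ 1, let K₁ > 0, K₂ > 0, let ε > −1, and let n₁, n₂ ∈ ℝ. If for every real z > 0 one has both K₁·z^{n₁} · K₂·(z/σ)^{n₂} = z/(1+ε) and K₂·z^{n₂} · K₁·(z/ρ)^{n₁} = z/(1+ε), then n₁ = ln(σ)/ln(σρ) (and consequently n₂ = ln(ρ)/ln(σρ)). -/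
/-!
Both sides of each functional relation are real monomials in `z`. Comparing exponents gives
`n₁ + n₂ = 1`; comparing coefficients gives `K₁ * K₂ * (1 + ε) = σ ^ n₂` in one relation and
`K₂ * K₁ * (1 + ε) = ρ ^ n₁` in the other, so `σ ^ n₂ = ρ ^ n₁`. Taking logarithms gives a
linear system in `n₁, n₂` with determinant `log σ + log ρ = log (σ * ρ)`.
-/

lemma coeff_eq_and_exponent_eq_of_mul_rpow_eq {A B p q : ℝ} (hB : B ≠ 0)
    (h : ∀ z : ℝ, 0 < z → A * z ^ p = B * z ^ q) : A = B ∧ p = q := by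
  have hAB : A = B := by simpa using h 1 one_pos
  have hexp : B * Real.exp p = B * Real.exp q := by
    simpa only [hAB, Real.exp_one_rpow] using h (Real.exp 1) (Real.exp_pos 1)
  exact ⟨hAB, Real.exp_injective (mul_left_cancel₀ hB hexp)⟩

lemma mul_rpow_mul_mul_div_rpow {τ z : ℝ} (hτ : 0 ≤ τ) (hz : 0 < z) (K L a b : ℝ) :
    K * z ^ a * (L * (z / τ) ^ b) = K * L / τ ^ b * z ^ (a + b) := by
  rw [Real.div_rpow hz.le hτ, Real.rpow_add hz]
  ring

lemma coeff_eq_rpow_and_exponent_add_eq_one {K L a b c τ : ℝ} (hτ : 0 < τ) (hc : c ≠ 0)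
    (h : ∀ z : ℝ, 0 < z → K * z ^ a * (L * (z / τ) ^ b) = z / c) :
    K * L * c = τ ^ b ∧ a + b = 1 := by
  have hmonomial : ∀ z : ℝ, 0 < z → K * L / τ ^ b * z ^ (a + b) = 1 / c * z ^ (1 : ℝ) := by
    intro z hz
    rw [← mul_rpow_mul_mul_div_rpow hτ.le hz, h z hz, Real.rpow_one, one_div_mul_eq_div]
  obtain ⟨hcoeff, hexponent⟩ :=
    coeff_eq_and_exponent_eq_of_mul_rpow_eq (one_div_ne_zero hc) hmonomial
  rw [div_eq_div_iff (Real.rpow_pos_of_pos hτ b).ne' hc, one_mul] at hcoeff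
  exact ⟨hcoeff, hexponent⟩

lemma eq_log_div_log_mul_of_rpow_eq_rpow {x y a b : ℝ} (hx : 0 < x) (hy : 0 < y)
    (hxy : x * y ≠ 1) (hab : a + b = 1) (h : x ^ b = y ^ a) :
    a = Real.log x / Real.log (x * y) := by
  have hlog : b * Real.log x = a * Real.log y := by
    simpa only [Real.log_rpow hx, Real.log_rpow hy] using congrArg Real.log h
  have hdet : Real.log (x * y) ≠ 0 :=
    Real.log_ne_zero_of_pos_of_ne_one (mul_pos hx hy) hxy
  rw [eq_div_iff hdet, Real.log_mul hx.ne' hy.ne']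
  linear_combination Real.log x * hab - hlog

theorem fractional_exponent_of_fractal_cauer_general
    {σ ρ K₁ K₂ ε n₁ n₂ : ℝ}
    (hσ : 0 < σ) (hρ : 0 < ρ) (hσρ : σ * ρ ≠ 1) (hε : 1 + ε ≠ 0)
    (hrel₁ : ∀ z : ℝ, 0 < z →
      K₁ * z ^ n₁ * (K₂ * (z / σ) ^ n₂) = z / (1 + ε))
    (hrel₂ : ∀ z : ℝ, 0 < z →
      K₂ * z ^ n₂ * (K₁ * (z / ρ) ^ n₁) = z / (1 + ε)) :
    n₁ = Real.log σ / Real.log (σ * ρ) ∧ n₂ = Real.log ρ / Real.log (σ * ρ) := by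
  obtain ⟨hcoeff₁, hsum⟩ := coeff_eq_rpow_and_exponent_add_eq_one hσ hε hrel₁
  obtain ⟨hcoeff₂, hsum'⟩ := coeff_eq_rpow_and_exponent_add_eq_one hρ hε hrel₂
  have hbalance : σ ^ n₂ = ρ ^ n₁ := by rw [← hcoeff₁, ← hcoeff₂, mul_comm K₁]
  refine ⟨eq_log_div_log_mul_of_rpow_eq_rpow hσ hρ hσρ hsum hbalance, ?_⟩
  rw [mul_comm σ] at hσρ ⊢
  exact eq_log_div_log_mul_of_rpow_eq_rpow hρ hσ hσρ hsum' hbalance.symm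

theorem fractional_exponent_of_fractal_cauer
    (σ ρ K₁ K₂ ε n₁ n₂ : ℝ)
    (hσ : 0 < σ) (hρ : 0 < ρ) (hσρ : σ * ρ ≠ 1)
    (hK₁ : 0 < K₁) (hK₂ : 0 < K₂) (hε : -1 < ε)
    (hrel₁ : ∀ z : ℝ, 0 < z →
      K₁ * z ^ n₁ * (K₂ * (z / σ) ^ n₂) = z / (1 + ε))
    (hrel₂ : ∀ z : ℝ, 0 < z →
      K₂ * z ^ n₂ * (K₁ * (z / ρ) ^ n₁) = z / (1 + ε)) :
    n₁ = Real.log σ / Real.log (σ * ρ) ∧ n₂ = Real.log ρ / Real.log (σ * ρ) :=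
  fractional_exponent_of_fractal_cauer_general hσ hρ hσρ (by linarith) hrel₁ hrel₂
end
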